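/- Let L be a lattice of dimension 6 in ℝ⁶ with Minkowski-reduced basis (e₁, …, e₆) such that e₁, e₂, e₃, e₄ are minimum vectors of L. Let m = x₁e₁ + ⋯ + x₆e₆ be a minimum vector of L with all coordinates xᵢ ∈ ℤ nonzero, and suppose {e₁, e₂, e₃, e₄, m} is a primitive system in L. Then |x₆| ≤ 3. -/

import Mathlib

/-!
The primitivity hypothesis forces `gcd (x₅, x₆) = 1`, so Minkowski reduction gives `‖e₅‖ ≤ ‖m‖`;
hence `f = (e₁, …, e₅, m)` consists of six vectors of the same minimal norm `l`.  Put `d = |x₆|`.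
The vector `e₆` has coordinates `bᵢ / d` with respect to `f`, where the `bᵢ` are integers and the
last one is `± 1`, so for `d ∤ k` no vector of the class of `k e₆` modulo the span of `f` vanishes,
and all these vectors have norm at least `l`.

If every vector of the class of `v = ∑ cᵢ fᵢ` has norm at least `l`, *Watson's identity*
`∑ |cᵢ| (‖v - sgn(cᵢ) fᵢ‖² - l²) = (∑ |cᵢ| - 2) ‖v‖²` yields `∑ |cᵢ| ≥ 2` (`Far.two_le`).
Take for `cᵢ` the signed distance of `k bᵢ / d` to the nearest integer.  For fixed `i` the sum of
`|cᵢ|` over `k` modulo `d` is at most `d / 4` (`sum_dist_le`), so adding up Watson's inequality over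
`0 < k < d` gives `2 (d - 1) ≤ 6 d / 4`, that is `d ≤ 4`.

For `d = 4` all inequalities are equalities: four coordinates of `e₆` are `± 1/4` and two are `1/2`
modulo integers.  The equality case of Watson's identity for `2 e₆` shows that the half sum `y` of
the four corresponding signed vectors of `f` has norm `l`.  For suitable signs,
`y / 2 ± f_j / 2 ± f_k / 2` then has square norm at most `l² / 4 + l² / 4 + l² / 4 < l²`, although
it is in the class of `e₆` (`no_index_four`).
-/

/-! ### Watson's identity -/

section Watson

variable {E : Type*} [NormedAddCommGroup E] [InnerProductSpace ℝ E]

/-- Every vector `∑ (c i + z i) • f i` with integral `z`, that is, every vector congruent to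
`∑ c i • f i` modulo the integral span of `f`, has norm at least `l`. -/
def Far (f : Fin 6 → E) (l : ℝ) (c : Fin 6 → ℝ) : Prop :=
  ∀ z : Fin 6 → ℤ, l ≤ ‖∑ i, (c i + (z i : ℝ)) • f i‖

/-- The sign of `t` as an integer, with the value `1` at `0`. -/
noncomputable def sg (t : ℝ) : ℤ := if 0 ≤ t then 1 else -1

lemma abs_mul_sg (t : ℝ) : |t| * (sg t : ℝ) = t := by
  unfold sg
  split_ifs with h
  · simp [abs_of_nonneg h]
  · simp [abs_of_neg (not_le.1 h)]

lemma sg_sq (t : ℝ) : (sg t : ℝ) ^ 2 = 1 := by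
  unfold sg
  split_ifs <;> simp

lemma Far.shift {f : Fin 6 → E} {l : ℝ} {c : Fin 6 → ℝ} (h : Far f l c) (w : Fin 6 → ℤ) :
    Far f l (fun i => c i + (w i : ℝ)) := by
  intro z
  have := h (fun i => w i + z i)
  simpa [add_assoc] using this

lemma Far.le_norm {f : Fin 6 → E} {l : ℝ} {c : Fin 6 → ℝ} (h : Far f l c) :
    l ≤ ‖∑ i, c i • f i‖ := by
  simpa using h 0

lemma Far.le_norm_sub {f : Fin 6 → E} {l : ℝ} {c : Fin 6 → ℝ} (h : Far f l c) (i : Fin 6)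
    (s : ℤ) : l ≤ ‖∑ j, c j • f j - (s : ℝ) • f i‖ := by
  have := h (Pi.single i (-s))
  have e : ∑ j, (c j + ((Pi.single i (-s) : Fin 6 → ℤ) j : ℝ)) • f j
      = ∑ j, c j • f j - (s : ℝ) • f i := by
    simp only [add_smul, Finset.sum_add_distrib, sub_eq_add_neg]
    congr 1
    rw [Finset.sum_eq_single i]
    · simp
    · intro j _ hj
      simp [Pi.single_eq_of_ne hj]
    · simp
  rwa [e] at this

lemma watson_identity {f : Fin 6 → E} {l : ℝ} (hf : ∀ i, ‖f i‖ = l) (c : Fin 6 → ℝ) :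
    ∑ i, |c i| * (‖∑ j, c j • f j - (sg (c i) : ℝ) • f i‖ ^ 2 - l ^ 2)
      = (∑ i, |c i| - 2) * ‖∑ j, c j • f j‖ ^ 2 := by
  set v := ∑ j, c j • f j with hv
  have h1 : ∀ i, |c i| * (‖v - (sg (c i) : ℝ) • f i‖ ^ 2 - l ^ 2)
      = |c i| * ‖v‖ ^ 2 - 2 * inner ℝ v (c i • f i) := by
    intro i
    rw [norm_sub_sq_real, norm_smul, mul_pow, Real.norm_eq_abs, sq_abs, sg_sq, hf,
      inner_smul_right, inner_smul_right]
    have := abs_mul_sg (c i)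
    linear_combination (-2 * inner ℝ v (f i)) * this
  simp_rw [h1]
  rw [Finset.sum_sub_distrib, ← Finset.sum_mul, ← Finset.mul_sum, ← inner_sum, ← hv,
    real_inner_self_eq_norm_sq]
  ring

lemma Far.watson_nonneg {f : Fin 6 → E} {l : ℝ} (hl : 0 < l) {c : Fin 6 → ℝ}
    (h : Far f l c) (i : Fin 6) :
    0 ≤ |c i| * (‖∑ j, c j • f j - (sg (c i) : ℝ) • f i‖ ^ 2 - l ^ 2) := by
  have := h.le_norm_sub i (sg (c i))
  have := pow_le_pow_left₀ hl.le this 2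
  exact mul_nonneg (abs_nonneg _) (by linarith)

lemma Far.two_le {f : Fin 6 → E} {l : ℝ} (hl : 0 < l) (hf : ∀ i, ‖f i‖ = l) {c : Fin 6 → ℝ}
    (h : Far f l c) : 2 ≤ ∑ i, |c i| := by
  have h0 := Finset.sum_nonneg (fun i (_ : i ∈ Finset.univ) => h.watson_nonneg hl i)
  rw [watson_identity hf] at h0
  have h1 : 0 < ‖∑ j, c j • f j‖ := hl.trans_le h.le_norm
  have h2 : 0 < ‖∑ j, c j • f j‖ ^ 2 := by positivity
  linarith [nonneg_of_mul_nonneg_left h0 h2]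

/-- The equality case of `Far.two_le`. -/
lemma Far.norm_sub_eq {f : Fin 6 → E} {l : ℝ} (hl : 0 < l) (hf : ∀ i, ‖f i‖ = l)
    {c : Fin 6 → ℝ} (h : Far f l c) (h2 : ∑ i, |c i| = 2) {i : Fin 6} (hi : c i ≠ 0) :
    ‖∑ j, c j • f j - (sg (c i) : ℝ) • f i‖ ^ 2 = l ^ 2 := by
  have h0 := watson_identity hf c
  rw [h2, sub_self, zero_mul,
    Finset.sum_eq_zero_iff_of_nonneg (fun i _ => h.watson_nonneg hl i)] at h0
  have := (mul_eq_zero.1 (h0 i (Finset.mem_univ i))).resolve_left (abs_ne_zero.2 hi)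
  linarith

/-- Averaging over all choices of signs, in the form of an existence statement. -/
lemma exists_signs (u : E) (s : Finset (Fin 6)) (w : Fin 6 → E) :
    ∃ ε : Fin 6 → ℤ, (∀ i, ε i = 1 ∨ ε i = -1) ∧
      ‖u + ∑ i ∈ s, (ε i : ℝ) • w i‖ ^ 2 ≤ ‖u‖ ^ 2 + ∑ i ∈ s, ‖w i‖ ^ 2 := by
  classical
  induction s using Finset.induction_on with
  | empty => exact ⟨fun _ => 1, by simp, by simp⟩
  | insert a s ha ih =>
    obtain ⟨ε, hε, h⟩ := ih
    set v := u + ∑ i ∈ s, (ε i : ℝ) • w i with hv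
    have key : ∀ t : ℤ, u + ∑ i ∈ insert a s, ((Function.update ε a t i : ℤ) : ℝ) • w i
        = v + (t : ℝ) • w a := by
      intro t
      rw [Finset.sum_insert ha, Function.update_self, hv]
      have : ∑ i ∈ s, ((Function.update ε a t i : ℤ) : ℝ) • w i = ∑ i ∈ s, (ε i : ℝ) • w i := by
        refine Finset.sum_congr rfl fun i hi => ?_
        rw [Function.update_of_ne (ne_of_mem_of_not_mem hi ha)]
      rw [this]
      abel
    have hup : ∀ t : ℤ, (t = 1 ∨ t = -1) →
        ∀ i, Function.update ε a t i = 1 ∨ Function.update ε a t i = -1 := by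
      intro t ht i
      by_cases hi : i = a
      · subst hi; simpa using ht
      · rw [Function.update_of_ne hi]; exact hε i
    have hs : ∑ i ∈ insert a s, ‖w i‖ ^ 2 = ‖w a‖ ^ 2 + ∑ i ∈ s, ‖w i‖ ^ 2 :=
      Finset.sum_insert ha
    -- the sign at `a` is chosen to make the cross term nonpositive
    rcases le_total (inner ℝ v (w a)) 0 with hin | hin
    · refine ⟨Function.update ε a 1, hup 1 (Or.inl rfl), ?_⟩
      rw [key, hs, Int.cast_one, one_smul, norm_add_sq_real]
      linarith
    · refine ⟨Function.update ε a (-1), hup (-1) (Or.inr rfl), ?_⟩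
      rw [key, hs, Int.cast_neg, Int.cast_one, neg_one_smul, ← sub_eq_add_neg, norm_sub_sq_real]
      linarith

/-- The index `4` is impossible; `c` is a set of coordinates in `(1/4) ℤ` reduced modulo `1`. -/
lemma no_index_four {f : Fin 6 → E} {l : ℝ} (hl : 0 < l) (hf : ∀ i, ‖f i‖ = l)
    {c : Fin 6 → ℝ} (hc : ∀ i, c i = 0 ∨ c i = 1 / 4 ∨ c i = -(1 / 4) ∨ c i = 1 / 2)
    (h1 : Far f l c) (h2 : Far f l (fun i => 2 * c i)) : False := by
  -- `c = a / 2 + h`, where `a` represents the doubled class and `h` marks the coordinates `1/2`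
  obtain ⟨a, h, ha, hah⟩ : ∃ a h : Fin 6 → ℝ, (∀ i, c i = a i / 2 + h i) ∧
      ∀ i, (h i = 0 ∧ (a i = 0 ∨ a i = 1 / 2 ∨ a i = -(1 / 2))) ∨ (h i = 1 / 2 ∧ a i = 0) := by
    refine ⟨fun i => if c i = 1 / 2 then 0 else 2 * c i, fun i => if c i = 1 / 2 then 1 / 2 else 0,
      fun i => ?_, fun i => ?_⟩
    · rcases hc i with h | h | h | h <;> simp only [h] <;> norm_num
    · rcases hc i with h | h | h | h <;> simp only [h] <;> norm_num
  have hFa : Far f l a := by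
    have := h2.shift (fun i => if h i = 0 then 0 else -1)
    convert this using 2 with i
    rcases hah i with ⟨h, -⟩ | ⟨h, h'⟩
    · rw [ha i, h]
      simp
      ring
    · rw [ha i, h, h']
      norm_num
  have s1 := h1.two_le hl hf
  have s2 := hFa.two_le hl hf
  have e1 : ∀ i, |c i| = |a i| / 2 + h i := by
    intro i
    rcases hah i with ⟨h, h' | h' | h'⟩ | ⟨h, h'⟩ <;> rw [ha i, h, h'] <;> norm_num [abs_of_pos]
  have e2 : ∀ i, |a i| + h i ≤ 1 / 2 := by
    intro i
    rcases hah i with ⟨h, h' | h' | h'⟩ | ⟨h, h'⟩ <;> rw [h, h'] <;> norm_num [abs_of_pos]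
  have e3 : ∀ i, h i ^ 2 = h i / 2 := by
    intro i
    rcases hah i with ⟨h, -⟩ | ⟨h, -⟩ <;> rw [h] <;> norm_num
  simp_rw [e1] at s1
  rw [Finset.sum_add_distrib, ← Finset.sum_div] at s1
  have e4 : ∑ i, |a i| + ∑ i, h i ≤ 3 := by
    rw [← Finset.sum_add_distrib]
    calc ∑ i, (|a i| + h i) ≤ ∑ _i : Fin 6, (1 / 2 : ℝ) := Finset.sum_le_sum fun i _ => e2 i
      _ = 3 := by norm_num
  have sa : ∑ i, |a i| = 2 := by linarith
  have sh : ∑ i, h i = 1 := by linarith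
  obtain ⟨i, hi⟩ : ∃ i, a i ≠ 0 := by
    by_contra! hcon
    simp [hcon] at sa
  -- The reflected vector `a'` is again extremal in Watson's inequality, and reflecting it at `i`
  -- gives back `a`.
  have ny : ‖∑ j, a j • f j‖ ^ 2 = l ^ 2 := by
    set a' : Fin 6 → ℝ := fun j => a j + ((Pi.single i (-sg (a i)) : Fin 6 → ℤ) j : ℝ) with ha'
    have hFa' : Far f l a' := hFa.shift _
    have hai : a i = 1 / 2 ∨ a i = -(1 / 2) := by
      rcases hah i with ⟨-, h' | h'⟩ | ⟨-, h'⟩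
      · exact absurd h' hi
      · exact h'
      · exact absurd h' hi
    have ha'i : a' i = - a i := by
      simp only [ha', Pi.single_eq_same, sg]
      rcases hai with h' | h' <;> rw [h'] <;> norm_num
    have ha'j : ∀ j, j ≠ i → a' j = a j := by
      intro j hj
      simp [ha', Pi.single_eq_of_ne hj]
    have sa' : ∑ j, |a' j| = 2 := by
      rw [← sa]
      refine Finset.sum_congr rfl fun j _ => ?_
      by_cases hj : j = i
      · rw [hj, ha'i, abs_neg]
      · rw [ha'j j hj]
    have := hFa'.norm_sub_eq hl hf sa' (i := i) (by rw [ha'i]; exact neg_ne_zero.2 hi)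
    rw [← this]
    congr 2
    have hd : ∑ j, a j • f j - ∑ j, a' j • f j = (a i - a' i) • f i := by
      rw [← Finset.sum_sub_distrib, Finset.sum_eq_single i]
      · rw [sub_smul]
      · intro j _ hj
        rw [ha'j j hj, sub_self]
      · simp
    have hsg : (a i - a' i) = -(sg (a' i) : ℝ) := by
      rw [ha'i, sg]
      rcases hai with h' | h' <;> rw [h'] <;> norm_num
    rw [hsg, neg_smul] at hd
    rw [sub_eq_iff_eq_add.1 hd]
    abel
  obtain ⟨ε, hε, hle⟩ := exists_signs ((1 / 2 : ℝ) • ∑ j, a j • f j) Finset.univ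
    (fun i => h i • f i)
  have hn : l ≤ ‖(1 / 2 : ℝ) • ∑ j, a j • f j + ∑ i, (ε i : ℝ) • h i • f i‖ := by
    have := h1 (fun i => if h i = 0 then 0 else if ε i = 1 then 0 else -1)
    convert this using 2
    rw [Finset.smul_sum, ← Finset.sum_add_distrib]
    refine Finset.sum_congr rfl fun i _ => ?_
    rw [smul_smul, smul_smul, ← add_smul]
    congr 1
    rw [ha i]
    rcases hah i with ⟨h, -⟩ | ⟨h, -⟩ <;> rcases hε i with h' | h' <;> rw [h, h'] <;> norm_num <;>
      ring
  have hn2 := pow_le_pow_left₀ hl.le hn 2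
  have hw : ∑ i, ‖h i • f i‖ ^ 2 = l ^ 2 / 2 := by
    simp_rw [norm_smul, mul_pow, Real.norm_eq_abs, sq_abs, e3, hf]
    rw [← Finset.sum_mul, ← Finset.sum_div, sh]
    ring
  rw [hw, norm_smul, mul_pow, ny] at hle
  norm_num at hle
  nlinarith [pow_pos hl 2]

end Watson

/-! ### Distances to the nearest integer -/

lemma sum_min_le (d : ℕ) : 4 * ∑ j ∈ Finset.range d, min j (d - j) ≤ d ^ 2 := by
  induction d using Nat.twoStepInduction with
  | zero => simp
  | one => simp
  | more d ih _ =>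
    rw [Finset.sum_range_succ']
    have : ∑ j ∈ Finset.range (d + 1), min (j + 1) (d + 2 - (j + 1))
        = ∑ j ∈ Finset.range d, min j (d - j) + (d + 1) := by
      have h1 : ∀ j ∈ Finset.range (d + 1),
          min (j + 1) (d + 2 - (j + 1)) = min j (d - j) + 1 := by
        intro j hj
        have := Finset.mem_range.1 hj
        omega
      rw [Finset.sum_congr rfl h1, Finset.sum_add_distrib, Finset.sum_range_succ]
      simp
    rw [this]
    simp only [zero_le, inf_of_le_left]
    nlinarith

/-- The distance of `t` to the nearest integer. -/
noncomputable def dst (t : ℝ) : ℝ := |t - round t|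

lemma dst_add_int (t : ℝ) (z : ℤ) : dst (t + z) = dst t := by
  simp [dst, round_add_intCast]

lemma dst_congr {d : ℕ} [NeZero d] (a b : ℤ) (h : (a : ZMod d) = b) :
    dst ((a : ℝ) / d) = dst ((b : ℝ) / d) := by
  obtain ⟨q, hq⟩ := (ZMod.intCast_eq_intCast_iff_dvd_sub a b d).1 h
  have hd : (d : ℝ) ≠ 0 := NeZero.ne _
  have : (b : ℝ) / d = (a : ℝ) / d + (q : ℤ) := by
    have : b = a + d * q := by linarith
    rw [this]
    push_cast
    field_simp
  rw [this, dst_add_int]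

lemma sum_dist_one_le (d : ℕ) (hd : 0 < d) :
    ∑ j ∈ Finset.range d, dst ((j : ℝ) / d) ≤ d / 4 := by
  have hd' : (0 : ℝ) < d := by exact_mod_cast hd
  have h1 : ∀ j ∈ Finset.range d, dst ((j : ℝ) / d) ≤ ((min j (d - j) : ℕ) : ℝ) / d := by
    intro j hj
    have hj := (Finset.mem_range.1 hj).le
    rw [Nat.cast_min, Nat.cast_sub hj, ← min_div_div_right hd'.le]
    refine le_min ?_ ?_
    · have := round_le ((j : ℝ) / d) 0
      rwa [Int.cast_zero, sub_zero, abs_of_nonneg (by positivity : (0 : ℝ) ≤ j / d)] at this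
    · have := round_le ((j : ℝ) / d) 1
      have h2 : (j : ℝ) / d ≤ 1 := by
        rw [div_le_one hd']
        exact_mod_cast hj
      rw [Int.cast_one, abs_sub_comm _ (1 : ℝ), abs_of_nonneg (by linarith : (0 : ℝ) ≤ 1 - j / d)] at this
      rw [sub_div, div_self hd'.ne']
      exact this
  refine (Finset.sum_le_sum h1).trans ?_
  rw [← Finset.sum_div, ← Nat.cast_sum, div_le_div_iff₀ hd' (by norm_num)]
  have := sum_min_le d
  have : (4 : ℝ) * ((∑ j ∈ Finset.range d, min j (d - j) : ℕ) : ℝ) ≤ d ^ 2 := by exact_mod_cast this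
  linarith

lemma sum_dist_coprime_le (d : ℕ) (hd : 0 < d) (b : ℤ) (hb : IsCoprime b (d : ℤ)) :
    ∑ k ∈ Finset.range d, dst ((k * b : ℝ) / d) ≤ d / 4 := by
  have : NeZero d := ⟨hd.ne'⟩
  refine le_trans (le_of_eq ?_) (sum_dist_one_le d hd)
  -- both sides are sums over `ZMod d`, on which multiplication by `b` is a permutation
  have hu : IsUnit (b : ZMod d) := (ZMod.coe_int_isUnit_iff_isCoprime b d).2 hb.symm
  obtain ⟨u, hu⟩ := hu
  have conv : ∀ g : ZMod d → ℝ, ∑ k ∈ Finset.range d, g (k : ZMod d) = ∑ k : ZMod d, g k := by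
    intro g
    refine Finset.sum_bij' (fun k _ => (k : ZMod d)) (fun k _ => k.val) ?_ ?_ ?_ ?_ ?_
    · simp
    · intro k _
      exact Finset.mem_range.2 (ZMod.val_lt k)
    · intro k hk
      exact ZMod.val_cast_of_lt (Finset.mem_range.1 hk)
    · intro k _
      simp
    · simp
  let g : ZMod d → ℝ := fun k => dst ((k.val : ℝ) / d)
  have hg : ∀ a : ℤ, g (a : ZMod d) = dst ((a : ℝ) / d) := by
    intro a
    have := dst_congr (d := d) (((a : ZMod d).val : ℕ) : ℤ) a (by simp)
    simpa [g] using this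
  have l1 : ∀ k ∈ Finset.range d, dst ((k * b : ℝ) / d) = g ((k : ZMod d) * u) := by
    intro k _
    have := hg (k * b)
    push_cast at this
    rw [hu, this]
  have l2 : ∀ k ∈ Finset.range d, dst ((k : ℝ) / d) = g (k : ZMod d) := by
    intro k _
    have := hg k
    push_cast at this
    exact this.symm
  rw [Finset.sum_congr rfl l1, Finset.sum_congr rfl l2, conv g, conv (fun k => g (k * u))]
  exact Equiv.sum_comp (Units.mulRight u) g

/-- The average distance of `k b / d` to the nearest integer is at most `1/4`. -/
lemma sum_dist_le (d : ℕ) (hd : 0 < d) (b : ℤ) :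
    ∑ k ∈ Finset.range d, dst ((k * b : ℝ) / d) ≤ d / 4 := by
  obtain ⟨g, hg⟩ : ∃ g : ℕ, g = Int.gcd b d := ⟨_, rfl⟩
  have hgpos : 0 < g := by
    rw [hg]
    exact Int.gcd_pos_of_ne_zero_right _ (by exact_mod_cast hd.ne')
  obtain ⟨b', hb'⟩ : (g : ℤ) ∣ b := hg ▸ Int.gcd_dvd_left ..
  obtain ⟨d', hd'⟩ : g ∣ d := by
    have : (g : ℤ) ∣ d := hg ▸ Int.gcd_dvd_right ..
    exact_mod_cast this
  have hd'pos : 0 < d' := by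
    rcases Nat.eq_zero_or_pos d' with h | h
    · simp [h] at hd'; omega
    · exact h
  have hcop : IsCoprime b' (d' : ℤ) := by
    rw [Int.isCoprime_iff_gcd_eq_one]
    have : g * Int.gcd b' d' = g * 1 := by
      conv_rhs => rw [mul_one, hg, hb', hd']
      push_cast
      rw [Int.gcd_mul_left]
      simp
    exact Nat.eq_of_mul_eq_mul_left hgpos this
  have hgR : (g : ℝ) ≠ 0 := by exact_mod_cast hgpos.ne'
  have hdR : (d' : ℝ) ≠ 0 := by exact_mod_cast hd'pos.ne'
  have hF : ∀ k : ℕ, dst ((k * b : ℝ) / d) = dst ((k * b' : ℝ) / d') := by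
    intro k
    rw [hb', hd']
    push_cast
    congr 1
    field_simp
  simp_rw [hF]
  have hper : ∀ n : ℕ, ∑ k ∈ Finset.range (n * d'), dst ((k * b' : ℝ) / d')
      = n * ∑ k ∈ Finset.range d', dst ((k * b' : ℝ) / d') := by
    intro n
    induction n with
    | zero => simp
    | succ n ih =>
      rw [Nat.succ_mul, Finset.sum_range_add, ih]
      have : ∀ k ∈ Finset.range d', dst ((((n * d' + k : ℕ) : ℝ) * b') / d')
          = dst ((k * b' : ℝ) / d') := by
        intro k _
        rw [← dst_add_int ((k * b' : ℝ) / d') (n * b')]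
        congr 1
        push_cast
        field_simp
        ring
      rw [Finset.sum_congr rfl this]
      push_cast
      ring
  rw [hd', hper g]
  have := sum_dist_coprime_le d' hd'pos b' hcop
  push_cast
  have hg0 : (0 : ℝ) ≤ g := by positivity
  nlinarith

/-! ### The index bound -/

/-- If the multiples of `∑ (b i / d) • f i` by `0 < k < d` have classes modulo the integral span of
`f` that contain no vector shorter than the `f i`, then `d ≤ 3`. -/
lemma index_le_three {E : Type*} [NormedAddCommGroup E] [InnerProductSpace ℝ E]
    {f : Fin 6 → E} {l : ℝ} (hl : 0 < l) (hf : ∀ i, ‖f i‖ = l) (d : ℕ) (b : Fin 6 → ℤ)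
    (H : ∀ k : ℕ, 0 < k → k < d → Far f l (fun i => (k * b i : ℝ) / d)) : d ≤ 3 := by
  by_contra! hd
  have hW : ∀ k : ℕ, 0 < k → k < d → 2 ≤ ∑ i, dst ((k * b i : ℝ) / d) := by
    intro k h0 h1
    have := ((H k h0 h1).shift (fun i => - round ((k * b i : ℝ) / d))).two_le hl hf
    simpa [dst, sub_eq_add_neg] using this
  have hsum : ∑ k ∈ Finset.range d, ∑ i, dst ((k * b i : ℝ) / d) ≤ 6 * (d / 4) := by
    rw [Finset.sum_comm]
    calc _ ≤ ∑ _i : Fin 6, (d / 4 : ℝ) :=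
          Finset.sum_le_sum fun i _ => sum_dist_le d (by omega) (b i)
      _ = 6 * (d / 4) := by simp
  obtain ⟨n, rfl⟩ : ∃ n, d = n + 1 := ⟨d - 1, by omega⟩
  rw [Finset.sum_range_succ'] at hsum
  have hlow : (n : ℝ) * 2 ≤ ∑ k ∈ Finset.range n, ∑ i,
      dst ((((k + 1 : ℕ) : ℝ) * b i) / ((n + 1 : ℕ) : ℝ)) := by
    calc (n : ℝ) * 2 = ∑ _k ∈ Finset.range n, (2 : ℝ) := by simp
      _ ≤ _ := Finset.sum_le_sum fun k hk => hW (k + 1) (by omega)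
        (by have := Finset.mem_range.1 hk; omega)
  have h0 : ∑ i, dst ((((0 : ℕ) : ℝ) * b i) / ((n + 1 : ℕ) : ℝ)) = 0 := by simp [dst]
  rw [h0] at hsum
  have hn : (n : ℝ) ≤ 3 := by
    push_cast at hsum hlow
    linarith
  have hn : n = 3 := by
    have : n ≤ 3 := by exact_mod_cast hn
    omega
  subst hn
  have H1 := H 1 (by norm_num) (by norm_num)
  have H2 := H 2 (by norm_num) (by norm_num)
  have hz : ∀ i, ∃ z : ℤ, (b i : ℝ) / 4 + z = 0 ∨ (b i : ℝ) / 4 + z = 1 / 4 ∨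
      (b i : ℝ) / 4 + z = -(1 / 4) ∨ (b i : ℝ) / 4 + z = 1 / 2 := by
    intro i
    have h4 : ∃ q r : ℤ, b i = 4 * q + r ∧ (r = 0 ∨ r = 1 ∨ r = -1 ∨ r = 2) := by
      have : b i % 4 = 0 ∨ b i % 4 = 1 ∨ b i % 4 = 2 ∨ b i % 4 = 3 := by omega
      rcases this with h | h | h | h
      · exact ⟨b i / 4, 0, by omega, by simp⟩
      · exact ⟨b i / 4, 1, by omega, by simp⟩
      · exact ⟨b i / 4, 2, by omega, by simp⟩
      · exact ⟨b i / 4 + 1, -1, by omega, by simp⟩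
    obtain ⟨q, r, hq, hr⟩ := h4
    refine ⟨-q, ?_⟩
    have e : (b i : ℝ) / 4 + ((-q : ℤ) : ℝ) = r / 4 := by
      rw [hq]; push_cast; ring
    rw [e]
    rcases hr with h | h | h | h <;> rw [h] <;> norm_num
  choose z hz using hz
  refine no_index_four hl hf hz ?_ ?_
  · have := H1.shift z
    convert this using 3
    push_cast
    ring
  · have := H2.shift (fun i => 2 * z i)
    convert this using 2
    push_cast
    ring

/-- dim 6, Minkowski-reduced basis (e₁,…,e₆) whose first four
vectors are minimum vectors; m a minimum vector with all coordinates nonzero,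
{e₁,e₂,e₃,e₄,m} a primitive system.  Then |x₆| ≤ 3. -/
theorem dim6_primitive_case_coord_bound
    (e : Fin 6 → EuclideanSpace ℝ (Fin 6)) (he : LinearIndependent ℝ e)
    (L : Set (EuclideanSpace ℝ (Fin 6)))
    (hL : L = {v | ∃ c : Fin 6 → ℤ, v = ∑ i, (c i : ℝ) • e i})
    (hred : ∀ (i : Fin 6) (c : Fin 6 → ℤ),
      Finset.gcd (Finset.univ.filter fun j => i ≤ j) c = 1 →
      ‖e i‖ ≤ ‖∑ j, (c j : ℝ) • e j‖)
    (hminvecs : ∀ i : Fin 6, (i : ℕ) < 4 → e i ≠ 0 ∧ ∀ w ∈ L, w ≠ 0 → ‖e i‖ ≤ ‖w‖)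
    (m : EuclideanSpace ℝ (Fin 6)) (hmL : m ∈ L) (hm0 : m ≠ 0)
    (hmin : ∀ w ∈ L, w ≠ 0 → ‖m‖ ≤ ‖w‖)
    (x : Fin 6 → ℤ) (hx : m = ∑ i, (x i : ℝ) • e i)
    (hx0 : ∀ i, x i ≠ 0)
    (f : Fin 5 → EuclideanSpace ℝ (Fin 6))
    (hf : f = ![e 0, e 1, e 2, e 3, m])
    (hfind : LinearIndependent ℝ f)
    (hprim : ∀ v ∈ L, v ∈ Submodule.span ℝ (Set.range f) →
      ∃ y : Fin 5 → ℤ, v = ∑ i, (y i : ℝ) • f i) :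
    |x 5| ≤ 3 := by
  -- integral combinations are compared coordinatewise with respect to `e`
  have hcoord : ∀ c : Fin 6 → ℝ, ∑ i, c i • e i = 0 → ∀ i, c i = 0 :=
    Fintype.linearIndependent_iff.1 he
  have hmem : ∀ c : Fin 6 → ℤ, ∑ i, (c i : ℝ) • e i ∈ L := fun c => by
    rw [hL]; exact ⟨c, rfl⟩
  have heL : ∀ i, e i ∈ L := by
    intro i
    rw [hL]
    refine ⟨Pi.single i 1, ?_⟩
    rw [Finset.sum_eq_single i]
    · simp
    · intro j _ hj
      simp [Pi.single_eq_of_ne hj]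
    · simp
  have hx5 : (x 5 : ℝ) ≠ 0 := by exact_mod_cast hx0 5
  have hgcd : Int.gcd (x 4) (x 5) = 1 := by
    set g := Int.gcd (x 4) (x 5) with hg
    have hgpos : 0 < g := Int.gcd_pos_of_ne_zero_left _ (hx0 4)
    have hgR : (g : ℝ) ≠ 0 := by exact_mod_cast hgpos.ne'
    obtain ⟨p, hp⟩ : (g : ℤ) ∣ x 4 := Int.gcd_dvd_left ..
    obtain ⟨q, hq⟩ : (g : ℤ) ∣ x 5 := Int.gcd_dvd_right ..
    have hpR : (x 4 : ℝ) = g * p := by exact_mod_cast hp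
    have hqR : (x 5 : ℝ) = g * q := by exact_mod_cast hq
    have hvL : (p : ℝ) • e 4 + (q : ℝ) • e 5 ∈ L := by
      have := hmem ![0, 0, 0, 0, p, q]
      simpa [Fin.sum_univ_succ] using this
    have hfs : ∀ i, f i ∈ Submodule.span ℝ (Set.range f) := fun i =>
      Submodule.subset_span ⟨i, rfl⟩
    have hv : (p : ℝ) • e 4 + (q : ℝ) • e 5
        = (g : ℝ)⁻¹ • (f 4 - ((x 0 : ℝ) • f 0 + (x 1 : ℝ) • f 1 + (x 2 : ℝ) • f 2
          + (x 3 : ℝ) • f 3)) := by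
      rw [eq_inv_smul_iff₀ hgR, hf]
      simp only [Matrix.cons_val]
      rw [hx, Fin.sum_univ_six, hpR, hqR]
      module
    obtain ⟨y, hy⟩ := hprim _ hvL (by
      rw [hv]
      refine Submodule.smul_mem _ _ (Submodule.sub_mem _ (hfs 4) ?_)
      refine Submodule.add_mem _ (Submodule.add_mem _ (Submodule.add_mem _ ?_ ?_) ?_) ?_ <;>
        exact Submodule.smul_mem _ _ (hfs _))
    have h5 := hcoord ![y 0 + y 4 * x 0, y 1 + y 4 * x 1, y 2 + y 4 * x 2, y 3 + y 4 * x 3,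
        y 4 * x 4 - p, y 4 * x 5 - q] (by
      rw [hf, Fin.sum_univ_five] at hy
      simp only [Matrix.cons_val] at hy
      rw [hx, Fin.sum_univ_six] at hy
      rw [Fin.sum_univ_six]
      simp only [Matrix.cons_val]
      rw [← sub_eq_zero] at hy
      rw [← neg_eq_zero, ← hy]
      module) 5
    simp only [Matrix.cons_val] at h5
    have hq0 : q ≠ 0 := by
      rintro rfl
      exact hx0 5 (by simpa using hq)
    have h5' : y 4 * x 5 - q = 0 := by exact_mod_cast h5
    have : (y 4 * g) * q = 1 * q := by rw [hq] at h5'; linarith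
    have h1 := mul_right_cancel₀ hq0 this
    have : (g : ℤ) ∣ 1 := ⟨y 4, by linarith⟩
    exact Nat.dvd_one.1 (by exact_mod_cast this)
  have he4 : ‖e 4‖ ≤ ‖m‖ := by
    rw [hx]
    refine hred 4 x ?_
    have hfil : (Finset.univ.filter fun j : Fin 6 => 4 ≤ j) = {4, 5} := by decide
    rw [hfil, Finset.gcd_insert, Finset.gcd_singleton]
    have : GCDMonoid.gcd (x 4) (x 5) = 1 := by rw [← Int.coe_gcd, hgcd, Nat.cast_one]
    rwa [(normalize_associated (x 5)).gcd_eq_right]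
  have hl : 0 < ‖m‖ := norm_pos_iff.2 hm0
  set F : Fin 6 → EuclideanSpace ℝ (Fin 6) := ![e 0, e 1, e 2, e 3, e 4, m] with hF
  have hFn : ∀ i, ‖F i‖ = ‖m‖ := by
    have h4 : ∀ i : Fin 6, (i : ℕ) < 4 → ‖e i‖ = ‖m‖ := fun i hi =>
      le_antisymm ((hminvecs i hi).2 m hmL hm0) (hmin _ (heL i) (hminvecs i hi).1)
    have h44 : ‖e 4‖ = ‖m‖ := le_antisymm he4 (hmin _ (heL 4) (he.ne_zero 4))
    intro i
    fin_cases i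
    · exact h4 0 (by decide)
    · exact h4 1 (by decide)
    · exact h4 2 (by decide)
    · exact h4 3 (by decide)
    · exact h44
    · rfl
  obtain ⟨s, hs, hs1⟩ : ∃ s : ℤ, s * x 5 = |x 5| ∧ s * s = 1 := by
    rcases abs_choice (x 5) with h | h
    · exact ⟨1, by rw [h]; ring, by norm_num⟩
    · exact ⟨-1, by rw [h]; ring, by norm_num⟩
  have hd : (((x 5).natAbs : ℕ) : ℝ) = s * x 5 := by
    have : (((x 5).natAbs : ℕ) : ℤ) = s * x 5 := by rw [hs, Int.natCast_natAbs]
    rw [← Int.cast_natCast, this, Int.cast_mul]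
  have hs1R : (s : ℝ) * s = 1 := by exact_mod_cast hs1
  have hs0 : (s : ℝ) ≠ 0 := left_ne_zero_of_mul_eq_one hs1R
  have hfin := index_le_three hl hFn (x 5).natAbs
    ![-(s * x 0), -(s * x 1), -(s * x 2), -(s * x 3), -(s * x 4), s] (by
    intro k hk0 hkd z
    -- the vector of the class of `k e₆` given by `z`, in coordinates with respect to `e`
    have hv : ∑ i, ((k * ((![-(s * x 0), -(s * x 1), -(s * x 2), -(s * x 3), -(s * x 4), s] :
          Fin 6 → ℤ) i : ℝ)) / ((x 5).natAbs : ℝ) + (z i : ℝ)) • F i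
        = ∑ i, ((![z 0 + z 5 * x 0, z 1 + z 5 * x 1, z 2 + z 5 * x 2, z 3 + z 5 * x 3,
          z 4 + z 5 * x 4, k + z 5 * x 5] : Fin 6 → ℤ) i : ℝ) • e i := by
      rw [hd, Fin.sum_univ_six, Fin.sum_univ_six, hF]
      simp only [Matrix.cons_val]
      rw [hx, Fin.sum_univ_six]
      push_cast
      match_scalars <;> field_simp <;> ring
    rw [hv]
    refine hmin _ (hmem _) fun h0 => ?_
    have h5 := hcoord _ h0 5
    simp only [Matrix.cons_val] at h5
    have h5' : (k : ℤ) + z 5 * x 5 = 0 := by exact_mod_cast h5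
    have hdvd : x 5 ∣ (k : ℤ) := ⟨-z 5, by linarith⟩
    have := Nat.le_of_dvd hk0 (Int.natAbs_dvd_natAbs.2 hdvd)
    omega)
  rw [Int.abs_eq_natAbs]
  exact_mod_cast hfin
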